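/- arXiv:1905.08781 — 2 statements merged into one kernel-verified Lean document; each statement's English description precedes it below -/
import Mathlib

section
/- There exists a single transition matrix T ∈ 𝒯 such that, for every x ∈ X, the limit lim_{n→∞} h_T^n(x) exists in [0,+∞] and equals hlow*(x), where hlow* := lim_{n→∞} hlow^n; that is, the lower expected hitting time of the imprecise Markov chain is attained by one homogeneous (precise) transition matrix compatible with 𝒯. -/
open Filter Topology

variable {X : Type*}

/-- The application of a transition "matrix" `T` to an extended-real-valued
function `f`, `(Tf)(x) = ∑ y, T x y * f y`, with the convention `0 * ⊤ = 0`
(which is the convention of `EReal` multiplication). -/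
noncomputable def matApply [Fintype X] (T : X → X → ℝ) (f : X → EReal) (x : X) : EReal :=
  ∑ y, (T x y : EReal) * f y

/-- `T` is a transition matrix: nonnegative entries, rows summing to one. -/
def IsTransMat [Fintype X] (T : X → X → ℝ) : Prop :=
  (∀ x y, 0 ≤ T x y) ∧ ∀ x, ∑ y, T x y = 1

/-- `𝒯` has separately specified rows. -/
def HasSepRows [Fintype X] (𝒯 : Set (X → X → ℝ)) : Prop :=
  ∀ sel : X → X → X → ℝ, (∀ x, sel x ∈ 𝒯) → ∃ T ∈ 𝒯, ∀ x y, T x y = sel x x y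

/-- The lower transition operator of `𝒯`. -/
noncomputable def lowerOp [Fintype X] (𝒯 : Set (X → X → ℝ)) (f : X → EReal) (x : X) : EReal :=
  ⨅ T ∈ 𝒯, matApply T f x

/-- The upper transition operator of `𝒯`. -/
noncomputable def upperOp [Fintype X] (𝒯 : Set (X → X → ℝ)) (f : X → EReal) (x : X) : EReal :=
  ⨆ T ∈ 𝒯, matApply T f x

/-- The `{0,1}`-indicator of a set `B ⊆ X`, as an extended-real-valued function. -/
noncomputable def indE (B : Set X) : X → EReal := fun x => Set.indicator B 1 x

/-- The lower hitting-time iterates: `hlow⁰ = 1_{Aᶜ}`,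
`hlowⁿ⁺¹ = 1_{Aᶜ} + 1_{Aᶜ} · (L hlowⁿ)`. -/
noncomputable def hlowIter [Fintype X] (𝒯 : Set (X → X → ℝ)) (A : Set X) : ℕ → X → EReal
  | 0 => indE Aᶜ
  | n + 1 => fun x => indE Aᶜ x + indE Aᶜ x * lowerOp 𝒯 (hlowIter 𝒯 A n) x

/-- The upper hitting-time iterates: `hup⁰ = 1_{Aᶜ}`,
`hupⁿ⁺¹ = 1_{Aᶜ} + 1_{Aᶜ} · (U hupⁿ)`. -/
noncomputable def hupIter [Fintype X] (𝒯 : Set (X → X → ℝ)) (A : Set X) : ℕ → X → EReal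
  | 0 => indE Aᶜ
  | n + 1 => fun x => indE Aᶜ x + indE Aᶜ x * upperOp 𝒯 (hupIter 𝒯 A n) x
/-- The hitting-time iterates for a single (precise) transition matrix `T`:
`h_T⁰ = 1_{Aᶜ}`, `h_Tⁿ⁺¹ = 1_{Aᶜ} + 1_{Aᶜ} · (T h_Tⁿ)`; their pointwise limit is the
expected hitting time of `A` for the homogeneous Markov chain with transition matrix `T`. -/
noncomputable def hPrecIter [Fintype X] (T : X → X → ℝ) (A : Set X) : ℕ → X → EReal
  | 0 => indE Aᶜ
  | n + 1 => fun x => indE Aᶜ x + indE Aᶜ x * matApply T (hPrecIter T A n) x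

/-! Let `H` be the pointwise supremum of the nondecreasing iterates `hlowⁿ`. On nonnegative
arguments `(f, T) ↦ T f` is jointly lower semicontinuous: the product of `[0, ∞]` fails to be
continuous only at `(0, ∞)` and `(∞, 0)`, where its value is the least possible one. Minimising
over the compact set `𝒯` therefore gives a lower semicontinuous operator `L`, so the inequality
`1_{Aᶜ} + 1_{Aᶜ} · L hlowⁿ ≤ H` passes to the limit. The minimum in `L H` is attained row by row,
hence by a single `T ∈ 𝒯`, so `1_{Aᶜ} + 1_{Aᶜ} · T H ≤ H`. By induction `hlowⁿ ≤ h_Tⁿ ≤ H`. -/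

section LowerSemicontinuity

variable {α β γ : Type*} [TopologicalSpace α] [TopologicalSpace β]

lemma exists_mem_biInf_eq_of_lowerSemicontinuousOn [CompleteLinearOrder γ] {K : Set α} {f : α → γ}
    (hK : IsCompact K) (hne : K.Nonempty) (hf : LowerSemicontinuousOn f K) :
    ∃ a ∈ K, ⨅ b ∈ K, f b = f a := by
  obtain ⟨a, ha, hmin⟩ := hf.exists_isMinOn hne hK
  exact ⟨a, ha, le_antisymm (iInf₂_le a ha) (le_iInf₂ hmin)⟩

lemma lowerSemicontinuousOn_biInf_of_isCompact [CompleteLinearOrder γ] {K : Set α} {s : Set β}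
    {g : β → α → γ} (hK : IsCompact K)
    (hg : LowerSemicontinuousOn (fun p : β × α => g p.1 p.2) (s ×ˢ K)) :
    LowerSemicontinuousOn (fun b => ⨅ a ∈ K, g b a) s := by
  rcases K.eq_empty_or_nonempty with rfl | hne
  · simpa using lowerSemicontinuousOn_const
  have hsection : ∀ b ∈ s, LowerSemicontinuousOn (g b) K := fun b hb =>
    hg.comp (g := fun a => (b, a)) (by fun_prop) fun a ha => ⟨hb, ha⟩
  intro b₀ hb₀ c hc
  have hnear : ∀ᶠ b in 𝓝 b₀, ∀ a ∈ K, b ∈ s → a ∈ K → c < g b a :=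
    hK.eventually_forall_of_forall_eventually fun a ha =>
      (eventually_nhdsWithin_iff.1 (hg (b₀, a) ⟨hb₀, ha⟩ c (hc.trans_le (iInf₂_le a ha)))).mono
        fun _ hp hb ha' => hp ⟨hb, ha'⟩
  filter_upwards [eventually_nhdsWithin_of_eventually_nhds hnear, self_mem_nhdsWithin]
    with b hlt hb
  obtain ⟨a, ha, hmin⟩ := exists_mem_biInf_eq_of_lowerSemicontinuousOn hK hne (hsection b hb)
  exact hmin ▸ hlt a ha hb ha

lemma le_of_tendsto_of_lowerSemicontinuousWithinAt {ι : Type*} [LinearOrder γ] {l : Filter ι}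
    [NeBot l] {f : α → γ} {s : Set α} {a : α} {u : ι → α} {c : γ}
    (hf : LowerSemicontinuousWithinAt f s a) (hu : Tendsto u l (𝓝 a)) (hmem : ∀ i, u i ∈ s)
    (hle : ∀ i, f (u i) ≤ c) : f a ≤ c := by
  have hu' : Tendsto u l (𝓝[s] a) :=
    tendsto_nhdsWithin_of_tendsto_nhds_of_eventually_within u hu (.of_forall hmem)
  by_contra! hlt
  obtain ⟨i, hi⟩ := (hu'.eventually (hf c hlt)).exists
  exact (hle i).not_gt hi

lemma lowerSemicontinuousOn_ereal_mul :
    LowerSemicontinuousOn (fun p : EReal × EReal => p.1 * p.2) (Set.Ici 0 ×ˢ Set.Ici 0) := by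
  rintro ⟨a, b⟩ ⟨ha : 0 ≤ a, hb : 0 ≤ b⟩
  by_cases h0 : a = 0 ∨ b = 0
  · intro c hc
    have hc0 : c < 0 := by rcases h0 with rfl | rfl <;> simpa using hc
    filter_upwards [self_mem_nhdsWithin] with p hp
    exact hc0.trans_le (mul_nonneg hp.1 hp.2)
  · rw [not_or] at h0
    exact (EReal.continuousAt_mul (.inl h0.1) (.inl h0.1) (.inr h0.2)
      (.inr h0.2)).lowerSemicontinuousAt.lowerSemicontinuousWithinAt _

lemma lowerSemicontinuousOn_ereal_sum {ι : Type*} {s : Set α} {f : ι → α → EReal} (t : Finset ι)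
    (hf : ∀ i, LowerSemicontinuousOn (f i) s) (hbot : ∀ i, ∀ a ∈ s, f i a ≠ ⊥) :
    LowerSemicontinuousOn (fun a => ∑ i ∈ t, f i a) s := by
  have hsum_bot : ∀ (t : Finset ι), ∀ a ∈ s, ∑ i ∈ t, f i a ≠ ⊥ := fun t a ha =>
    Finset.sum_induction _ (· ≠ ⊥) (fun _ _ hx hy => EReal.add_ne_bot_iff.2 ⟨hx, hy⟩) (by simp)
      fun i _ => hbot i a ha
  classical
  induction t using Finset.induction_on with
  | empty => simpa using lowerSemicontinuousOn_const
  | insert i t hi ih =>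
    simp only [Finset.sum_insert hi]
    exact (hf i).add' ih fun a ha =>
      EReal.continuousAt_add (.inr (hsum_bot t a ha)) (.inl (hbot i a ha))

end LowerSemicontinuity

section TransitionOperators

variable [Fintype X] {𝒯 : Set (X → X → ℝ)} {T : X → X → ℝ} {f : X → EReal}

lemma matApply_mono (hT : 0 ≤ T) : Monotone (matApply T) := fun _ _ hfg x =>
  Finset.sum_le_sum fun y _ => mul_le_mul_of_nonneg_left (hfg y) (EReal.coe_nonneg.2 (hT x y))

lemma matApply_nonneg (hT : 0 ≤ T) (hf : 0 ≤ f) : 0 ≤ matApply T f := fun x =>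
  Finset.sum_nonneg fun y _ => mul_nonneg (EReal.coe_nonneg.2 (hT x y)) (hf y)

lemma lowerSemicontinuousOn_matApply (x : X) :
    LowerSemicontinuousOn (fun p : (X → EReal) × (X → X → ℝ) => matApply p.2 p.1 x)
      (Set.Ici 0 ×ˢ Set.Ici 0) := by
  refine lowerSemicontinuousOn_ereal_sum _ (fun y => ?_) fun y p hp =>
    (EReal.bot_lt_zero.trans_le (mul_nonneg (EReal.coe_nonneg.2 (hp.2 x y)) (hp.1 y))).ne'
  have hentry : Continuous fun p : (X → EReal) × (X → X → ℝ) => ((p.2 x y : EReal), p.1 y) :=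
    (continuous_coe_real_ereal.comp (by fun_prop)).prodMk (by fun_prop)
  exact lowerSemicontinuousOn_ereal_mul.comp hentry.continuousOn fun p hp =>
    ⟨EReal.coe_nonneg.2 (hp.2 x y), hp.1 y⟩

lemma lowerOp_le_matApply (hT : T ∈ 𝒯) : lowerOp 𝒯 f ≤ matApply T f := fun _ => iInf₂_le T hT

lemma lowerOp_mono (h𝒯 : 𝒯 ⊆ Set.Ici 0) : Monotone (lowerOp 𝒯) := fun _ _ hfg x =>
  iInf₂_mono fun _ hT => matApply_mono (h𝒯 hT) hfg x

lemma lowerOp_nonneg (h𝒯 : 𝒯 ⊆ Set.Ici 0) (hf : 0 ≤ f) : 0 ≤ lowerOp 𝒯 f := fun x =>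
  le_iInf₂ fun _ hT => matApply_nonneg (h𝒯 hT) hf x

lemma lowerSemicontinuousOn_lowerOp (hcpt : IsCompact 𝒯) (h𝒯 : 𝒯 ⊆ Set.Ici 0) (x : X) :
    LowerSemicontinuousOn (fun f => lowerOp 𝒯 f x) (Set.Ici 0) :=
  lowerSemicontinuousOn_biInf_of_isCompact hcpt <|
    (lowerSemicontinuousOn_matApply x).mono (Set.prod_mono_right h𝒯)

lemma HasSepRows.exists_lowerOp_eq_matApply (hsep : HasSepRows 𝒯) (hcpt : IsCompact 𝒯)
    (hne : 𝒯.Nonempty) (h𝒯 : 𝒯 ⊆ Set.Ici 0) (hf : 0 ≤ f) :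
    ∃ T ∈ 𝒯, lowerOp 𝒯 f = matApply T f := by
  have hrow : ∀ x, ∃ T ∈ 𝒯, lowerOp 𝒯 f x = matApply T f x := fun x =>
    exists_mem_biInf_eq_of_lowerSemicontinuousOn hcpt hne <|
      (lowerSemicontinuousOn_matApply x).comp (g := fun T => (f, T)) (by fun_prop)
        fun _ hT => ⟨hf, h𝒯 hT⟩
  choose sel hsel hmin using hrow
  obtain ⟨T, hT, hrows⟩ := hsep sel hsel
  refine ⟨T, hT, funext fun x => ?_⟩
  simp only [hmin x, matApply, hrows]

lemma isCompact_of_isClosed_of_isTransMat (hcl : IsClosed 𝒯) (hmem : ∀ T ∈ 𝒯, IsTransMat T) :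
    IsCompact 𝒯 :=
  (isCompact_univ_pi fun _ => isCompact_stdSimplex ℝ X).of_isClosed_subset hcl
    fun T hT x _ => ⟨(hmem T hT).1 x, (hmem T hT).2 x⟩

end TransitionOperators

section HittingTimes

variable {A : Set X}

lemma indE_nonneg (B : Set X) : 0 ≤ indE B := fun _ => Set.indicator_nonneg (by simp) _

/-- One step of the hitting-time recursion: given the expected remaining times `g` after the next
transition, the expected hitting times `1_{Aᶜ} + 1_{Aᶜ} · g`. In the recursions `g` is the image
of the previous iterate under `lowerOp 𝒯` or `matApply T`. -/
noncomputable def hitStep (A : Set X) (g : X → EReal) (x : X) : EReal :=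
  indE Aᶜ x + indE Aᶜ x * g x

lemma hitStep_of_mem {x : X} (hx : x ∈ A) (g : X → EReal) : hitStep A g x = 0 := by
  simp [hitStep, indE, hx]

lemma hitStep_of_notMem {x : X} (hx : x ∉ A) (g : X → EReal) : hitStep A g x = 1 + g x := by
  simp [hitStep, indE, hx]

lemma hitStep_mono (A : Set X) : Monotone (hitStep A) := fun _ _ hgg' x =>
  add_le_add_right (mul_le_mul_of_nonneg_left (hgg' x) (indE_nonneg Aᶜ x)) _

lemma indE_le_hitStep {g : X → EReal} (hg : 0 ≤ g) : indE Aᶜ ≤ hitStep A g := fun x =>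
  le_add_of_nonneg_right (mul_nonneg (indE_nonneg Aᶜ x) (hg x))

lemma lowerSemicontinuousOn_hitStep {α : Type*} [TopologicalSpace α] {s : Set α}
    {g : α → X → EReal} {x : X} (hg : LowerSemicontinuousOn (fun a => g a x) s) :
    LowerSemicontinuousOn (fun a => hitStep A (g a) x) s := by
  by_cases hx : x ∈ A
  · simpa only [hitStep_of_mem hx] using lowerSemicontinuousOn_const
  · simp only [hitStep_of_notMem hx]
    exact lowerSemicontinuousOn_const.add' hg fun _ _ =>
      EReal.continuousAt_add (.inl (EReal.coe_ne_top 1)) (.inl (EReal.coe_ne_bot 1))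

variable [Fintype X] {𝒯 : Set (X → X → ℝ)} {T : X → X → ℝ}

lemma hlowIter_mono (h𝒯 : 𝒯 ⊆ Set.Ici 0) (A : Set X) : Monotone (hlowIter 𝒯 A) := by
  refine monotone_nat_of_le_succ fun n => ?_
  induction n with
  | zero => exact indE_le_hitStep (lowerOp_nonneg h𝒯 (indE_nonneg Aᶜ))
  | succ n ih => exact hitStep_mono A (lowerOp_mono h𝒯 ih)

lemma hlowIter_nonneg (h𝒯 : 𝒯 ⊆ Set.Ici 0) (A : Set X) (n : ℕ) : 0 ≤ hlowIter 𝒯 A n :=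
  (indE_nonneg Aᶜ).trans (hlowIter_mono h𝒯 A n.zero_le)

/-- The lower expected hitting time `hlow*`, encoded as the pointwise supremum of the iterates
`hlowⁿ`; by `tendsto_hlowIter` it is also their limit. -/
noncomputable def lowerHittingTime (𝒯 : Set (X → X → ℝ)) (A : Set X) : X → EReal :=
  ⨆ n, hlowIter 𝒯 A n

lemma hlowIter_le_lowerHittingTime (n : ℕ) : hlowIter 𝒯 A n ≤ lowerHittingTime 𝒯 A :=
  le_iSup (hlowIter 𝒯 A) n

lemma lowerHittingTime_nonneg (𝒯 : Set (X → X → ℝ)) (A : Set X) : 0 ≤ lowerHittingTime 𝒯 A :=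
  (indE_nonneg Aᶜ).trans (hlowIter_le_lowerHittingTime 0)

lemma tendsto_hlowIter (h𝒯 : 𝒯 ⊆ Set.Ici 0) (A : Set X) :
    Tendsto (hlowIter 𝒯 A) atTop (𝓝 (lowerHittingTime 𝒯 A)) :=
  tendsto_atTop_iSup (hlowIter_mono h𝒯 A)

lemma hitStep_lowerOp_lowerHittingTime_le (hcpt : IsCompact 𝒯) (h𝒯 : 𝒯 ⊆ Set.Ici 0) :
    hitStep A (lowerOp 𝒯 (lowerHittingTime 𝒯 A)) ≤ lowerHittingTime 𝒯 A := fun x =>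
  le_of_tendsto_of_lowerSemicontinuousWithinAt (f := fun f => hitStep A (lowerOp 𝒯 f) x)
    (lowerSemicontinuousOn_hitStep (lowerSemicontinuousOn_lowerOp hcpt h𝒯 x) _
      (lowerHittingTime_nonneg 𝒯 A))
    (tendsto_hlowIter h𝒯 A) (hlowIter_nonneg h𝒯 A) fun n => hlowIter_le_lowerHittingTime (n + 1) x

lemma hlowIter_le_hPrecIter (h𝒯 : 𝒯 ⊆ Set.Ici 0) (hT : T ∈ 𝒯) (n : ℕ) :
    hlowIter 𝒯 A n ≤ hPrecIter T A n := by
  induction n with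
  | zero => exact le_rfl
  | succ n ih =>
    exact hitStep_mono A ((lowerOp_le_matApply hT).trans (matApply_mono (h𝒯 hT) ih))

lemma hPrecIter_le_of_hitStep_le (hT : 0 ≤ T) {h : X → EReal} (hh : 0 ≤ h)
    (hstep : hitStep A (matApply T h) ≤ h) (n : ℕ) : hPrecIter T A n ≤ h := by
  induction n with
  | zero => exact (indE_le_hitStep (matApply_nonneg hT hh)).trans hstep
  | succ n ih => exact (hitStep_mono A (matApply_mono hT ih)).trans hstep

end HittingTimes

theorem lower_hitting_time_attained_general [Fintype X] {𝒯 : Set (X → X → ℝ)}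
    (h𝒯 : 𝒯 ⊆ Set.Ici 0) (hne : 𝒯.Nonempty) (hcpt : IsCompact 𝒯) (hsep : HasSepRows 𝒯)
    (A : Set X) :
    ∃ hlowStar : X → EReal,
      (∀ x, Tendsto (fun n => hlowIter 𝒯 A n x) atTop (𝓝 (hlowStar x))) ∧
      ∃ T ∈ 𝒯, ∀ x, Tendsto (fun n => hPrecIter T A n x) atTop (𝓝 (hlowStar x)) := by
  have hlim := tendsto_pi_nhds.1 (tendsto_hlowIter h𝒯 A)
  have hnonneg := lowerHittingTime_nonneg 𝒯 A
  obtain ⟨T, hT, hLT⟩ := hsep.exists_lowerOp_eq_matApply hcpt hne h𝒯 hnonneg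
  have hstep : hitStep A (matApply T (lowerHittingTime 𝒯 A)) ≤ lowerHittingTime 𝒯 A :=
    hLT ▸ hitStep_lowerOp_lowerHittingTime_le hcpt h𝒯
  exact ⟨lowerHittingTime 𝒯 A, hlim, T, hT, fun x =>
    tendsto_of_tendsto_of_tendsto_of_le_of_le (hlim x) tendsto_const_nhds
      (fun n => hlowIter_le_hPrecIter h𝒯 hT n x)
      fun n => hPrecIter_le_of_hitStep_le (h𝒯 hT) hnonneg hstep n x⟩

/-- The lower expected hitting time of the imprecise Markov chain is attained by a single
homogeneous (precise) transition matrix compatible with `𝒯`. -/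
theorem lower_hitting_time_attained [Fintype X] [Nonempty X]
    (𝒯 : Set (X → X → ℝ))
    (hmem : ∀ T ∈ 𝒯, IsTransMat T) (hne : 𝒯.Nonempty) (hcl : IsClosed 𝒯)
    (hcv : Convex ℝ 𝒯) (hsep : HasSepRows 𝒯) (A : Set X) :
    ∃ hlowStar : X → EReal,
      (∀ x, Tendsto (fun n => hlowIter 𝒯 A n x) atTop (𝓝 (hlowStar x))) ∧
      ∃ T ∈ 𝒯, ∀ x, Tendsto (fun n => hPrecIter T A n x) atTop (𝓝 (hlowStar x)) :=
  lower_hitting_time_attained_general (fun T hT => (hmem T hT).1) hne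
    (isCompact_of_isClosed_of_isTransMat hcl hmem) hsep A
end

section
/- The sequence (pup^n)_{n≥0} is pointwise nondecreasing with values in [0,1], so its pointwise limit pup* := lim_{n→∞} pup^n exists as a function X → [0,1]; moreover pup* is the minimal nonnegative solution of the upper hitting-probability system: pup* satisfies pup* = 1_A + 1_{A^c}·(U pup*), and every nonnegative function p : X → ℝ satisfying p = 1_A + 1_{A^c}·(U p) dominates pup* pointwise. -/
open Filter Topology

variable {X : Type*}

/-- The `{0,1}`-indicator of a set `B ⊆ X`, as a real-valued function. -/
noncomputable def indR (B : Set X) : X → ℝ := fun x => Set.indicator B 1 x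

/-- The restriction of the lower transition operator to real-valued functions
(on which it is real-valued). -/
noncomputable def lowerOpR [Fintype X] (𝒯 : Set (X → X → ℝ)) (f : X → ℝ) (x : X) : ℝ :=
  (lowerOp 𝒯 (fun y => (f y : EReal)) x).toReal

/-- The restriction of the upper transition operator to real-valued functions
(on which it is real-valued). -/
noncomputable def upperOpR [Fintype X] (𝒯 : Set (X → X → ℝ)) (f : X → ℝ) (x : X) : ℝ :=
  (upperOp 𝒯 (fun y => (f y : EReal)) x).toReal

/-- The lower hitting-probability iterates: `plow⁰ = 1_A`,
`plowⁿ⁺¹ = 1_A + 1_{Aᶜ} · (L plowⁿ)`. -/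
noncomputable def plowIter [Fintype X] (𝒯 : Set (X → X → ℝ)) (A : Set X) : ℕ → X → ℝ
  | 0 => indR A
  | n + 1 => fun x => indR A x + indR Aᶜ x * lowerOpR 𝒯 (plowIter 𝒯 A n) x

/-- The upper hitting-probability iterates: `pup⁰ = 1_A`,
`pupⁿ⁺¹ = 1_A + 1_{Aᶜ} · (U pupⁿ)`. -/
noncomputable def pupIter [Fintype X] (𝒯 : Set (X → X → ℝ)) (A : Set X) : ℕ → X → ℝ
  | 0 => indR A
  | n + 1 => fun x => indR A x + indR Aᶜ x * upperOpR 𝒯 (pupIter 𝒯 A n) x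

/-!
`pupIter 𝒯 A n` is the `n`-th iterate, started at `1_A`, of the map `f ↦ 1_A + 1_{Aᶜ} · (U f)`.
This map is monotone, continuous (`U` is nonexpansive in the sup norm) and sends the constant `1`
below itself, so Kleene iteration from `1_A` converges to its least prefixed point above `1_A`.
Every nonnegative prefixed point lies above `1_A`.
-/

section KleeneIteration

variable {α : Type*} {f : α → α} {x p : α}

lemma iterate_le_of_map_le [Preorder α] (hf : Monotone f) (hxp : x ≤ p) (hp : f p ≤ p) (n : ℕ) :
    f^[n] x ≤ p :=
  (hf.iterate n hxp).trans (hf.antitone_iterate_of_map_le hp n.zero_le)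

lemma exists_tendsto_iterate_isFixedPt_isLeast [ConditionallyCompleteLattice α]
    [TopologicalSpace α] [SupConvergenceClass α] [OrderClosedTopology α]
    (hf : Monotone f) (hcont : Continuous f) (hx : x ≤ f x)
    (hne : {p | x ≤ p ∧ f p ≤ p}.Nonempty) :
    ∃ q, Tendsto (fun n => f^[n] x) atTop (𝓝 q) ∧ Function.IsFixedPt f q ∧
      IsLeast {p | x ≤ p ∧ f p ≤ p} q := by
  have hmono : Monotone fun n => f^[n] x := hf.monotone_iterate_of_le_map hx
  obtain ⟨b, hxb, hb⟩ := hne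
  have hbdd : BddAbove (Set.range fun n => f^[n] x) :=
    ⟨b, Set.forall_mem_range.2 (iterate_le_of_map_le hf hxb hb)⟩
  have hlim := tendsto_atTop_ciSup hmono hbdd
  have hfix := isFixedPt_of_tendsto_iterate hlim hcont.continuousAt
  exact ⟨_, hlim, hfix, ⟨le_ciSup hbdd 0, hfix.le⟩,
    fun _ hp => ciSup_le (iterate_le_of_map_le hf hp.1 hp.2)⟩

end KleeneIteration

lemma indR_nonneg (B : Set X) : 0 ≤ indR B := fun _ =>
  Set.indicator_nonneg (fun _ _ => zero_le_one) _

lemma indR_add_indR_compl (B : Set X) (x : X) : indR B x + indR Bᶜ x = 1 :=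
  congrFun (Set.indicator_self_add_compl B 1) x

section UpperHittingProbability

variable [Fintype X] {𝒯 : Set (X → X → ℝ)} {T : X → X → ℝ} {f : X → ℝ} {c : ℝ}

/-- `T` is a substochastic matrix: nonnegative entries, rows summing to at most one. The missing
mass of a row is the probability of being killed, and counts as never hitting the target. -/
def IsSubTransMat (T : X → X → ℝ) : Prop :=
  (∀ x y, 0 ≤ T x y) ∧ ∀ x, ∑ y, T x y ≤ 1

lemma IsTransMat.isSubTransMat (hT : IsTransMat T) : IsSubTransMat T :=
  ⟨hT.1, fun x => (hT.2 x).le⟩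

lemma IsSubTransMat.sum_mul_le (hT : IsSubTransMat T) (hc : 0 ≤ c) (hf : ∀ y, f y ≤ c) (x : X) :
    ∑ y, T x y * f y ≤ c :=
  calc ∑ y, T x y * f y
    _ ≤ ∑ y, T x y * c := Finset.sum_le_sum fun y _ => mul_le_mul_of_nonneg_left (hf y) (hT.1 x y)
    _ = (∑ y, T x y) * c := (Finset.sum_mul ..).symm
    _ ≤ c := mul_le_of_le_one_left hc (hT.2 x)

lemma matApply_coe (T : X → X → ℝ) (f : X → ℝ) (x : X) :
    matApply T (fun y => (f y : EReal)) x = ((∑ y, T x y * f y : ℝ) : EReal) := by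
  let coeHom : ℝ →+ EReal := ⟨⟨Real.toEReal, EReal.coe_zero⟩, EReal.coe_add⟩
  simp only [matApply, ← EReal.coe_mul]
  exact (map_sum coeHom _ _).symm

lemma upperOpR_eq_iSup (hne : 𝒯.Nonempty) {x : X}
    (hbdd : BddAbove (Set.range fun T : 𝒯 => ∑ y, T.1 x y * f y)) :
    upperOpR 𝒯 f x = ⨆ T : 𝒯, ∑ y, T.1 x y * f y := by
  have : Nonempty 𝒯 := hne.to_subtype
  have hcoe := EReal.coe_strictMono.monotone.map_ciSup_of_continuousAt
    continuous_coe_real_ereal.continuousAt hbdd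
  simp only [upperOpR, upperOp, matApply_coe, iSup_subtype', ← hcoe, EReal.toReal_coe]

lemma bddAbove_range_sum_mul (hmem : ∀ T ∈ 𝒯, IsSubTransMat T) (f : X → ℝ) (x : X) :
    BddAbove (Set.range fun T : 𝒯 => ∑ y, T.1 x y * f y) :=
  ⟨‖f‖, Set.forall_mem_range.2 fun T => (hmem T T.2).sum_mul_le (norm_nonneg f)
    (fun y => (le_abs_self _).trans (norm_le_pi_norm f y)) x⟩

lemma upperOpR_le_iff (hmem : ∀ T ∈ 𝒯, IsSubTransMat T) (hne : 𝒯.Nonempty) {x : X} :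
    upperOpR 𝒯 f x ≤ c ↔ ∀ T ∈ 𝒯, ∑ y, T x y * f y ≤ c := by
  have : Nonempty 𝒯 := hne.to_subtype
  have hbdd := bddAbove_range_sum_mul hmem f x
  rw [upperOpR_eq_iSup hne hbdd, ciSup_le_iff hbdd, Subtype.forall]

lemma sum_mul_le_upperOpR (hmem : ∀ T ∈ 𝒯, IsSubTransMat T) (hT : T ∈ 𝒯) (f : X → ℝ) (x : X) :
    ∑ y, T x y * f y ≤ upperOpR 𝒯 f x :=
  (upperOpR_le_iff hmem ⟨T, hT⟩).1 le_rfl T hT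

lemma upperOpR_mono (hmem : ∀ T ∈ 𝒯, IsSubTransMat T) (hne : 𝒯.Nonempty) :
    Monotone (upperOpR 𝒯) := fun _ g hfg x =>
  (upperOpR_le_iff hmem hne).2 fun T hT =>
    (Finset.sum_le_sum fun y _ => mul_le_mul_of_nonneg_left (hfg y) ((hmem T hT).1 x y)).trans
      (sum_mul_le_upperOpR hmem hT g x)

lemma upperOpR_nonneg (hmem : ∀ T ∈ 𝒯, IsSubTransMat T) (hne : 𝒯.Nonempty) (hf : 0 ≤ f) :
    0 ≤ upperOpR 𝒯 f := fun x =>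
  let ⟨T, hT⟩ := hne
  (Finset.sum_nonneg fun y _ => mul_nonneg ((hmem T hT).1 x y) (hf y)).trans
    (sum_mul_le_upperOpR hmem hT f x)

lemma lipschitzWith_upperOpR_apply (hmem : ∀ T ∈ 𝒯, IsSubTransMat T) (hne : 𝒯.Nonempty) (x : X) :
    LipschitzWith 1 fun f => upperOpR 𝒯 f x :=
  LipschitzWith.of_le_add fun f g => (upperOpR_le_iff hmem hne).2 fun T hT =>
    have hdist : ∀ y, (f - g) y ≤ dist f g := fun y =>
      (Real.sub_le_dist (f y) (g y)).trans (dist_le_pi_dist f g y)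
    calc ∑ y, T x y * f y
      _ = ∑ y, T x y * g y + ∑ y, T x y * (f - g) y := by
        simp only [← Finset.sum_add_distrib, ← mul_add, Pi.sub_apply, add_sub_cancel]
      _ ≤ upperOpR 𝒯 g x + dist f g :=
        add_le_add (sum_mul_le_upperOpR hmem hT g x) ((hmem T hT).sum_mul_le dist_nonneg hdist x)

/-- The right-hand side `f ↦ 1_A + 1_{Aᶜ} · (U f)` of the upper hitting-probability system, as a
self-map of `X → ℝ`. -/
noncomputable def upperHitStep (𝒯 : Set (X → X → ℝ)) (A : Set X) (f : X → ℝ) : X → ℝ :=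
  fun x => indR A x + indR Aᶜ x * upperOpR 𝒯 f x

lemma pupIter_eq_iterate (𝒯 : Set (X → X → ℝ)) (A : Set X) (n : ℕ) :
    pupIter 𝒯 A n = (upperHitStep 𝒯 A)^[n] (indR A) := by
  induction n with
  | zero => rfl
  | succ n ih => rw [Function.iterate_succ_apply', ← ih]; rfl

lemma upperHitStep_mono (hmem : ∀ T ∈ 𝒯, IsSubTransMat T) (hne : 𝒯.Nonempty) (A : Set X) :
    Monotone (upperHitStep 𝒯 A) := fun _ _ hfg x =>
  add_le_add_right (mul_le_mul_of_nonneg_left (upperOpR_mono hmem hne hfg x) (indR_nonneg _ x)) _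

lemma continuous_upperHitStep (hmem : ∀ T ∈ 𝒯, IsSubTransMat T) (hne : 𝒯.Nonempty) (A : Set X) :
    Continuous (upperHitStep 𝒯 A) :=
  continuous_pi fun x =>
    continuous_const.add (continuous_const.mul (lipschitzWith_upperOpR_apply hmem hne x).continuous)

lemma indR_le_upperHitStep (hmem : ∀ T ∈ 𝒯, IsSubTransMat T) (hne : 𝒯.Nonempty) (A : Set X)
    (hf : 0 ≤ f) : indR A ≤ upperHitStep 𝒯 A f := fun x =>
  le_add_of_nonneg_right (mul_nonneg (indR_nonneg _ x) (upperOpR_nonneg hmem hne hf x))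

lemma upperHitStep_one_le (hmem : ∀ T ∈ 𝒯, IsSubTransMat T) (hne : 𝒯.Nonempty) (A : Set X) :
    upperHitStep 𝒯 A 1 ≤ 1 := fun x =>
  have hU : upperOpR 𝒯 1 x ≤ 1 := (upperOpR_le_iff hmem hne).2 fun T hT =>
    (hmem T hT).sum_mul_le zero_le_one (fun _ => le_rfl) x
  calc indR A x + indR Aᶜ x * upperOpR 𝒯 1 x
    _ ≤ indR A x + indR Aᶜ x :=
      add_le_add_right (mul_le_of_le_one_right (indR_nonneg _ x) hU) _
    _ = 1 := indR_add_indR_compl A x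

theorem pupStar_minimal_solution_general (hmem : ∀ T ∈ 𝒯, IsSubTransMat T) (hne : 𝒯.Nonempty)
    (A : Set X) :
    (∀ x, Monotone fun n => pupIter 𝒯 A n x) ∧
    (∀ n x, pupIter 𝒯 A n x ∈ Set.Icc (0 : ℝ) 1) ∧
    ∃ pupStar : X → ℝ,
      (∀ x, Tendsto (fun n => pupIter 𝒯 A n x) atTop (𝓝 (pupStar x))) ∧
      (∀ x, pupStar x ∈ Set.Icc (0 : ℝ) 1) ∧
      (∀ x, pupStar x = indR A x + indR Aᶜ x * upperOpR 𝒯 pupStar x) ∧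
      ∀ p : X → ℝ, (∀ x, 0 ≤ p x) →
        (∀ x, indR A x + indR Aᶜ x * upperOpR 𝒯 p x ≤ p x) →
        ∀ x, pupStar x ≤ p x := by
  have hstep := upperHitStep_mono hmem hne A
  have hind := indR_le_upperHitStep hmem hne A (indR_nonneg A)
  have hone : (1 : X → ℝ) ∈ {p | indR A ≤ p ∧ upperHitStep 𝒯 A p ≤ p} :=
    have hle := upperHitStep_one_le hmem hne A
    ⟨(indR_le_upperHitStep hmem hne A zero_le_one).trans hle, hle⟩
  have hmono : Monotone (pupIter 𝒯 A) := by
    simpa only [← pupIter_eq_iterate] using hstep.monotone_iterate_of_le_map hind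
  obtain ⟨q, hlim, hfix, hq, hleast⟩ := exists_tendsto_iterate_isFixedPt_isLeast hstep
    (continuous_upperHitStep hmem hne A) hind ⟨1, hone⟩
  simp only [← pupIter_eq_iterate, tendsto_pi_nhds] at hlim
  refine ⟨fun x _ _ hmn => hmono hmn x, fun n x => ⟨?_, ?_⟩, q, hlim, fun x => ⟨?_, ?_⟩,
    fun x => (congrFun hfix x).symm, fun p hp0 hp => hleast ⟨?_, hp⟩⟩
  · exact (indR_nonneg A x).trans (hmono n.zero_le x)
  · exact pupIter_eq_iterate 𝒯 A n ▸ iterate_le_of_map_le hstep hone.1 hone.2 n x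
  · exact (indR_nonneg A x).trans (hq.1 x)
  · exact hleast hone x
  · exact (indR_le_upperHitStep hmem hne A hp0).trans hp

end UpperHittingProbability

/-- The upper hitting-probability iterates are pointwise nondecreasing with values in
`[0,1]`, so converge pointwise; their limit is the minimal nonnegative solution of the
upper hitting-probability system. -/
theorem pupStar_minimal_solution [Fintype X] [Nonempty X]
    (𝒯 : Set (X → X → ℝ))
    (hmem : ∀ T ∈ 𝒯, IsTransMat T) (hne : 𝒯.Nonempty) (hcl : IsClosed 𝒯)
    (hcv : Convex ℝ 𝒯) (hsep : HasSepRows 𝒯) (A : Set X) :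
    (∀ x, Monotone fun n => pupIter 𝒯 A n x) ∧
    (∀ n x, pupIter 𝒯 A n x ∈ Set.Icc (0 : ℝ) 1) ∧
    ∃ pupStar : X → ℝ,
      (∀ x, Tendsto (fun n => pupIter 𝒯 A n x) atTop (𝓝 (pupStar x))) ∧
      (∀ x, pupStar x ∈ Set.Icc (0 : ℝ) 1) ∧
      (∀ x, pupStar x = indR A x + indR Aᶜ x * upperOpR 𝒯 pupStar x) ∧
      ∀ p : X → ℝ, (∀ x, 0 ≤ p x) →
        (∀ x, p x = indR A x + indR Aᶜ x * upperOpR 𝒯 p x) →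
        ∀ x, pupStar x ≤ p x := by
  obtain ⟨hmono, hIcc, q, hlim, hq, hfix, hmin⟩ :=
    pupStar_minimal_solution_general (fun T hT => (hmem T hT).isSubTransMat) hne A
  exact ⟨hmono, hIcc, q, hlim, hq, hfix, fun p hp0 hp => hmin p hp0 fun x => (hp x).ge⟩
end
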